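/- Let D be a totally unimodular real m×n matrix such that no index i is a loop (De_i ≠ 0 for every i) and no index i is a coloop (e_i ∉ B for every i), and suppose that 2x ∈ B_I for every x ∈ B_I^#. Then each row of the orthogonal projection matrix P onto the cut space B has exactly two nonzero entries: for every i, P_{ii} = 1/2 and there is exactly one index j ≠ i with P_{ij} ≠ 0, and for that j one has P_{ij} = 1/2 or P_{ij} = −1/2. -/

import Mathlib

open Matrix

variable {m n : ℕ}

/-- The cycle space `Z = ker D`. -/
def cycleSpace (D : Matrix (Fin m) (Fin n) ℝ) : Submodule ℝ (Fin n → ℝ) :=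
  LinearMap.ker D.mulVecLin

/-- The cut space `B = Z^⊥`, the orthogonal complement of the cycle space with respect to the
standard inner product on `ℝⁿ`. -/
def cutSpace (D : Matrix (Fin m) (Fin n) ℝ) : Submodule ℝ (Fin n → ℝ) where
  carrier := {x | ∀ z ∈ cycleSpace D, x ⬝ᵥ z = 0}
  add_mem' := by
    intro a b ha hb z hz
    simp [add_dotProduct, ha z hz, hb z hz]
  zero_mem' := by
    intro z hz
    simp
  smul_mem' := by
    intro c a ha z hz
    simp [smul_dotProduct, ha z hz]

/-- The cycle lattice `Z_I = Z ∩ ℤⁿ`. -/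
def cycleLattice (D : Matrix (Fin m) (Fin n) ℝ) : Set (Fin n → ℝ) :=
  {x | x ∈ cycleSpace D ∧ ∀ i, ∃ k : ℤ, x i = (k : ℝ)}

/-- The cut lattice `B_I = B ∩ ℤⁿ`. -/
def cutLattice (D : Matrix (Fin m) (Fin n) ℝ) : Set (Fin n → ℝ) :=
  {x | x ∈ cutSpace D ∧ ∀ i, ∃ k : ℤ, x i = (k : ℝ)}

/-- The dual lattice `B_I^# = {x ∈ B : ⟨x,b⟩ ∈ ℤ for all b ∈ B_I}`. -/
def dualLattice (D : Matrix (Fin m) (Fin n) ℝ) : Set (Fin n → ℝ) :=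
  {x | x ∈ cutSpace D ∧ ∀ b ∈ cutLattice D, ∃ k : ℤ, x ⬝ᵥ b = (k : ℝ)}

/-- `P` is the orthogonal projection matrix onto the cut space `B`: `Px ∈ B` and
`x - Px ∈ B^⊥ = Z` for every `x`. -/
def IsCutProjection (D : Matrix (Fin m) (Fin n) ℝ) (P : Matrix (Fin n) (Fin n) ℝ) : Prop :=
  ∀ x : Fin n → ℝ, P.mulVec x ∈ cutSpace D ∧ x - P.mulVec x ∈ cycleSpace D

/-
The columns `P eᵢ` of the orthogonal projection onto `B` lie in `B_I^#`, so the exponent hypothesis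
makes `2P`, and with it the reflection `2P - 1`, an integer matrix. This reflection is orthogonal,
and an integer vector of length one is `±eⱼ`; hence row `i` of `2P` is `eᵢ ± eⱼ`. If `j = i`, then
`P eᵢ` is `0` or `eᵢ`, that is, `i` is a loop or a coloop.
-/

lemma exists_eq_single_units_of_dotProduct_self_eq_one {ι : Type*} [Fintype ι] [DecidableEq ι]
    {v : ι → ℤ} (hv : v ⬝ᵥ v = 1) : ∃ (j : ι) (ε : ℤˣ), v = Pi.single j (ε : ℤ) := by
  obtain ⟨j, hj⟩ : ∃ j, v j ≠ 0 := by
    by_contra! hzero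
    simp [dotProduct, hzero] at hv
  have hsplit : v j * v j + ∑ k ∈ Finset.univ.erase j, v k * v k = 1 :=
    (Finset.add_sum_erase _ (fun k ↦ v k * v k) (Finset.mem_univ j)).trans hv
  have hrest : 0 ≤ ∑ k ∈ Finset.univ.erase j, v k * v k :=
    Finset.sum_nonneg fun k _ ↦ mul_self_nonneg (v k)
  have hpos : 0 < v j * v j := mul_self_pos.2 hj
  have hunit : v j * v j = 1 := by omega
  have hoff : ∀ k ∈ Finset.univ.erase j, v k * v k = 0 :=
    (Finset.sum_eq_zero_iff_of_nonneg fun k _ ↦ mul_self_nonneg (v k)).1 (by omega)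
  refine ⟨j, Units.mkOfMulEqOne _ _ hunit, funext fun k ↦ ?_⟩
  obtain rfl | hkj := eq_or_ne k j
  · simp
  · simpa [hkj] using hoff k (by simp [hkj])

section StarRing

variable {ι R : Type*} [Fintype ι] [DecidableEq ι] [Ring R] [StarRing R] [CharZero R]

lemma exists_row_eq_single_units_of_mem_unitary {U : Matrix ι ι R} (hU : U ∈ unitary (Matrix ι ι R))
    {i : ι} (hrow : ∀ k, ∃ a : ℤ, U i k = a) :
    ∃ (j : ι) (ε : ℤˣ), U.row i = Pi.single j ((ε : ℤ) : R) := by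
  choose a ha using hrow
  have hnorm : a ⬝ᵥ a = 1 := by
    have h : (U * star U) i i = 1 := by rw [Unitary.mul_star_self_of_mem hU, one_apply_eq]
    simp only [mul_apply, star_apply, ha, star_intCast] at h
    simp only [dotProduct]
    exact_mod_cast h
  obtain ⟨j, ε, rfl⟩ := exists_eq_single_units_of_dotProduct_self_eq_one hnorm
  refine ⟨j, ε, funext fun k ↦ ?_⟩
  rw [row_apply, ha, Pi.single_apply, Pi.single_apply]
  split_ifs <;> simp

lemma exists_two_mul_row_eq_single_add_single_of_isStarProjection {A : Matrix ι ι R}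
    (hA : IsStarProjection A) {i : ι} (hrow : ∀ k, ∃ a : ℤ, 2 * A i k = a) :
    ∃ (j : ι) (ε : ℤˣ), 2 * A.row i = Pi.single i 1 + Pi.single j ((ε : ℤ) : R) := by
  have hentry (k : ι) : (2 * A - 1 : Matrix ι ι R) i k = 2 * A i k - (Pi.single i 1 : ι → R) k := by
    simp [two_mul, one_eq_pi_single]
  have hreflect : ∀ k, ∃ a : ℤ, (2 * A - 1 : Matrix ι ι R) i k = a := fun k ↦ by
    obtain ⟨a, ha⟩ := hrow k
    refine ⟨a - (Pi.single i 1 : ι → ℤ) k, ?_⟩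
    rw [hentry, ha, Pi.single_apply, Pi.single_apply]
    split_ifs <;> simp
  obtain ⟨j, ε, hj⟩ :=
    exists_row_eq_single_units_of_mem_unitary hA.two_mul_sub_one_mem_unitary hreflect
  refine ⟨j, ε, ?_⟩
  rw [← hj]
  ext k
  simp [hentry]

end StarRing

namespace IsCutProjection

variable {D : Matrix (Fin m) (Fin n) ℝ} {P : Matrix (Fin n) (Fin n) ℝ}

lemma dotProduct_mulVec_of_mem_cutSpace (hP : IsCutProjection D P) {b : Fin n → ℝ}
    (hb : b ∈ cutSpace D) (x : Fin n → ℝ) : b ⬝ᵥ P *ᵥ x = b ⬝ᵥ x := by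
  have horth : b ⬝ᵥ (x - P *ᵥ x) = 0 := hb _ (hP x).2
  rw [dotProduct_sub, sub_eq_zero] at horth
  exact horth.symm

lemma transpose_mul_self (hP : IsCutProjection D P) : Pᵀ * P = Pᵀ := by
  ext i j
  calc (Pᵀ * P) i j = P *ᵥ Pi.single i 1 ⬝ᵥ P *ᵥ Pi.single j 1 := by
        simp [mul_apply, dotProduct]
    _ = P *ᵥ Pi.single i 1 ⬝ᵥ Pi.single j 1 := hP.dotProduct_mulVec_of_mem_cutSpace (hP _).1 _
    _ = Pᵀ i j := by simp

lemma isSymm (hP : IsCutProjection D P) : P.IsSymm := by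
  rw [IsSymm, ← hP.transpose_mul_self]
  simpa using congrArg transpose hP.transpose_mul_self

lemma isStarProjection (hP : IsCutProjection D P) : IsStarProjection P where
  isIdempotentElem := by simpa only [IsIdempotentElem, hP.isSymm.eq] using hP.transpose_mul_self
  isSelfAdjoint := isHermitian_iff_isSymm.2 hP.isSymm

lemma mulVec_mem_dualLattice (hP : IsCutProjection D P) {x : Fin n → ℝ}
    (hx : ∀ i, ∃ k : ℤ, x i = k) : P *ᵥ x ∈ dualLattice D := by
  refine ⟨(hP x).1, fun b ⟨hb, hbint⟩ ↦ ?_⟩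
  choose y hy using hx
  choose c hc using hbint
  refine ⟨c ⬝ᵥ y, ?_⟩
  rw [dotProduct_comm, hP.dotProduct_mulVec_of_mem_cutSpace hb]
  simp [dotProduct, hy, hc]

lemma exists_int_two_mul_eq (hP : IsCutProjection D P)
    (hexp : ∀ x ∈ dualLattice D, (2 : ℝ) • x ∈ cutLattice D) (i j : Fin n) :
    ∃ a : ℤ, 2 * P i j = a := by
  have hsingle (k : Fin n) : ∃ a : ℤ, (Pi.single j 1 : Fin n → ℝ) k = a :=
    ⟨(Pi.single j 1 : Fin n → ℤ) k, by simp [Pi.single_apply]⟩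
  simpa using (hexp _ (hP.mulVec_mem_dualLattice hsingle)).2 i

lemma mulVec_single_one_eq_row (hP : IsCutProjection D P) (i : Fin n) :
    P *ᵥ Pi.single i 1 = P.row i := by
  rw [mulVec_single_one, ← row_transpose, hP.isSymm.eq]

lemma row_ne_zero (hP : IsCutProjection D P) {i : Fin n}
    (hloop : D *ᵥ Pi.single i 1 ≠ 0) : P.row i ≠ 0 := fun hrow ↦ hloop <| by
  have hker : Pi.single i 1 ∈ cycleSpace D := by
    simpa only [hP.mulVec_single_one_eq_row, hrow, sub_zero] using (hP (Pi.single i 1)).2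
  exact hker

lemma row_ne_single (hP : IsCutProjection D P) {i : Fin n}
    (hcoloop : Pi.single i 1 ∉ cutSpace D) : P.row i ≠ Pi.single i 1 := fun hrow ↦ hcoloop <| by
  simpa only [hP.mulVec_single_one_eq_row, hrow] using (hP (Pi.single i 1)).1

end IsCutProjection

theorem stmt8_general {D : Matrix (Fin m) (Fin n) ℝ} {P : Matrix (Fin n) (Fin n) ℝ}
    (hP : IsCutProjection D P) (hexp : ∀ x ∈ dualLattice D, (2 : ℝ) • x ∈ cutLattice D)
    {i : Fin n} (hloop : D *ᵥ Pi.single i 1 ≠ 0) (hcoloop : Pi.single i 1 ∉ cutSpace D) :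
    P i i = 1/2 ∧
      ∃ j : Fin n, j ≠ i ∧ (P i j = 1/2 ∨ P i j = -(1/2)) ∧
        ∀ k : Fin n, k ≠ i → k ≠ j → P i k = 0 := by
  obtain ⟨j, ε, hrow⟩ := exists_two_mul_row_eq_single_add_single_of_isStarProjection
    hP.isStarProjection (hP.exists_int_two_mul_eq hexp i)
  have hentry (k : Fin n) :
      P i k = ((Pi.single i 1 : Fin n → ℝ) k + (Pi.single j (ε : ℤ) : Fin n → ℝ) k) / 2 := by
    have h := congrFun hrow k
    simp only [Pi.mul_apply, Pi.ofNat_apply, Pi.add_apply, row_apply] at h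
    linarith
  have hji : j ≠ i := by
    rintro rfl
    obtain rfl | rfl := Int.units_eq_one_or ε
    · exact hP.row_ne_single hcoloop (funext fun k ↦ by simp [hentry])
    · exact hP.row_ne_zero hloop (funext fun k ↦ by simp [hentry, Pi.single_neg])
  refine ⟨by simp [hentry, hji.symm], j, hji, ?_, fun k hki hkj ↦ by simp [hentry, hki, hkj]⟩
  obtain rfl | rfl := Int.units_eq_one_or ε
  · exact Or.inl (by simp [hentry, hji])
  · exact Or.inr (by simp [hentry, hji, neg_div])

/-- under the hypotheses of Statement 7, each row of the projection matrix `P`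
has exactly two nonzero entries: `P i i = 1/2`, and there is exactly one `j ≠ i` with
`P i j ≠ 0`, for which `P i j = ±1/2`. -/
theorem stmt8 (m n : ℕ) (D : Matrix (Fin m) (Fin n) ℝ)
    (hTU : D.IsTotallyUnimodular)
    (hloop : ∀ i : Fin n, D.mulVec (Pi.single i (1 : ℝ)) ≠ 0)
    (hcoloop : ∀ i : Fin n, Pi.single i (1 : ℝ) ∉ cutSpace D)
    (hexp : ∀ x ∈ dualLattice D, (2 : ℝ) • x ∈ cutLattice D)
    (P : Matrix (Fin n) (Fin n) ℝ) (hP : IsCutProjection D P) :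
    ∀ i : Fin n, P i i = 1/2 ∧
      ∃ j : Fin n, j ≠ i ∧ (P i j = 1/2 ∨ P i j = -(1/2)) ∧
        ∀ k : Fin n, k ≠ i → k ≠ j → P i k = 0 := by
  intro i
  exact stmt8_general hP hexp (hloop i) (hcoloop i)
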